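/- Let d ≥ 1, ν > 1, and let γ ∈ ℝ satisfy γ ≤ -d/2. Set Γ := d/2 - 4/(ν-1). Let φ₀ be a Schwartz function on ℝ^d for which there exist κ > -γ - d/2, C₀ > 0 and r₀ > 0 such that |φ̂₀(ξ)| ≤ C₀ |ξ|^κ for all |ξ| ≤ r₀. Then there exists C > 0 such that for all λ, δ with 0 < λ ≤ δ ≤ 1, the function g(x) := λ^{-4/(ν-1)} φ₀(λ^{-1} δ x) satisfies ‖g‖_{H^γ} ≤ C λ^{Γ-γ} δ^{γ - d/2}. -/

import Mathlib

open MeasureTheory Real Complex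
open scoped FourierTransform ENNReal SchwartzMap

/-- The Sobolev norm `‖f‖_{H^γ} = (∫ (1+|ξ|²)^γ |f̂(ξ)|² dξ)^{1/2}`, valued in `[0,∞]`. -/
noncomputable def sobNorm {d : ℕ} (γ : ℝ) (f : EuclideanSpace ℝ (Fin d) → ℂ) : ℝ≥0∞ :=
  (∫⁻ ξ : EuclideanSpace ℝ (Fin d),
      ENNReal.ofReal ((1 + ‖ξ‖ ^ 2) ^ γ) * (‖𝓕 f ξ‖₊ : ℝ≥0∞) ^ (2 : ℝ)) ^ ((1 : ℝ) / 2)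

open Asymptotics Metric Module
open scoped Topology

/-!
For `γ ≤ 0` the inhomogeneous weight satisfies `(1 + |ξ|²)^γ ≤ |ξ|^{2γ}`, so the `H^γ` norm is at
most the homogeneous `Ḣ^γ` norm, which scales exactly: dilating by `a` multiplies it by
`a^{γ - d/2}`. With `a = λ⁻¹δ` this is the claimed power of `λ` and `δ`, and it only remains to see
that `φ₀` has finite `Ḣ^γ` norm. Away from the origin the weight `|ξ|^{2γ}` is bounded and
`φ̂₀ ∈ L²`; near the origin the integrand is `O(|ξ|^{2(γ + κ)})`, which is integrable
because `2(γ + κ) > -d`.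
-/

section PowerWeight

variable {V E : Type*} [NormedAddCommGroup V] [NormedAddCommGroup E]
  {f : V → E} {C r s κ : ℝ}

theorem isBigO_rpow_norm_of_norm_le (hr : 0 < r) (hbound : ∀ x, ‖x‖ ≤ r → ‖f x‖ ≤ C * ‖x‖ ^ κ) :
    f =O[𝓝 0] fun x => ‖x‖ ^ κ := by
  refine .of_bound C ?_
  filter_upwards [closedBall_mem_nhds 0 hr] with x hx
  rw [norm_of_nonneg (rpow_nonneg (norm_nonneg x) κ)]
  exact hbound x (by simpa using hx)

variable [NormedSpace ℝ E]

theorem norm_rpow_norm_smul (x : V) (y : E) : ‖‖x‖ ^ s • y‖ = ‖x‖ ^ s * ‖y‖ := by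
  rw [norm_smul, norm_of_nonneg (by positivity)]

variable [MeasurableSpace V] [OpensMeasurableSpace V] {μ : Measure V} {p : ℝ≥0∞}

theorem aestronglyMeasurable_rpow_norm_smul (hf : AEStronglyMeasurable f μ) :
    AEStronglyMeasurable (fun x => ‖x‖ ^ s • f x) μ :=
  (measurable_norm.pow_const s).aestronglyMeasurable.smul hf

theorem memLp_rpow_norm_smul_compl_ball (hf : MemLp f p μ) (hs : s ≤ 0) (hr : 0 < r) :
    MemLp (fun x => ‖x‖ ^ s • f x) p (μ.restrict (ball 0 r)ᶜ) := by
  refine (hf.restrict _).of_le_mul (c := r ^ s)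
    (aestronglyMeasurable_rpow_norm_smul hf.1).restrict ?_
  filter_upwards [ae_restrict_mem measurableSet_ball.compl] with x hx
  have hrx : r ≤ ‖x‖ := by simpa using hx
  rw [norm_rpow_norm_smul]
  exact mul_le_mul_of_nonneg_right (rpow_le_rpow_of_nonpos hr hrx hs) (norm_nonneg _)

end PowerWeight

section HaarMeasure

variable {V E : Type*} [NormedAddCommGroup V] [NormedSpace ℝ V] [FiniteDimensional ℝ V]
  [MeasurableSpace V] [BorelSpace V] [NormedAddCommGroup E]
  {μ : Measure V} [μ.IsAddHaarMeasure] {p : ℝ≥0∞} {f : V → E} {C r s κ : ℝ}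

theorem eLpNorm_comp_smul (f : V → E) {a : ℝ} (ha : a ≠ 0) (hp : p ≠ ∞) :
    eLpNorm (fun x => f (a • x)) p μ =
      ENNReal.ofReal |(a ^ finrank ℝ V)⁻¹| ^ (1 / p).toReal * eLpNorm f p μ := by
  have hemb : MeasurableEmbedding (a • · : V → V) :=
    (Homeomorph.smulOfNeZero a ha).measurableEmbedding
  calc eLpNorm (fun x => f (a • x)) p μ = eLpNorm f p (μ.map (a • ·)) :=
        hemb.eLpNorm_map_measure.symm
    _ = ENNReal.ofReal |(a ^ finrank ℝ V)⁻¹| ^ (1 / p).toReal * eLpNorm f p μ := by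
        rw [Measure.map_addHaar_smul μ ha, eLpNorm_smul_measure_of_ne_top hp, smul_eq_mul]

theorem memLp_restrict_ball_of_norm_le_rpow [Nontrivial V] (hp₀ : p ≠ 0) (hp : p ≠ ∞)
    (hs : -(finrank ℝ V / p.toReal) < s) (hf : AEStronglyMeasurable f μ)
    (hbound : ∀ᵐ x ∂μ.restrict (ball 0 r), ‖f x‖ ≤ C * ‖x‖ ^ s) :
    MemLp f p (μ.restrict (ball 0 r)) := by
  have hp_pos : 0 < p.toReal := ENNReal.toReal_pos hp₀ hp
  have hexp : -(s * p.toReal) < finrank ℝ V := by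
    rw [neg_lt, ← div_lt_iff₀ hp_pos, neg_div]
    exact hs
  rw [← integrable_norm_rpow_iff hf.restrict hp₀ hp]
  refine integrableOn_ball_of_norm_le_rpow (C := |C| ^ p.toReal) finrank_pos hexp ?_
    (hf.norm.aemeasurable.pow_const _).aestronglyMeasurable
  filter_upwards [hbound] with x hx
  calc ‖‖f x‖ ^ p.toReal‖ = ‖f x‖ ^ p.toReal := norm_of_nonneg (by positivity)
    _ ≤ (|C| * ‖x‖ ^ s) ^ p.toReal := by
      gcongr
      exact hx.trans (by gcongr; exact le_abs_self C)
    _ = |C| ^ p.toReal * ‖x‖ ^ (- -(s * p.toReal)) := by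
      rw [mul_rpow (abs_nonneg C) (by positivity), neg_neg, rpow_mul (norm_nonneg x)]

variable [NormedSpace ℝ E]

theorem memLp_rpow_norm_smul [Nontrivial V] (hp₀ : p ≠ 0) (hp : p ≠ ∞) (hs : s ≤ 0)
    (hκ : -s - finrank ℝ V / p.toReal < κ) (hf : MemLp f p μ)
    (hvanish : f =O[𝓝[≠] 0] fun x => ‖x‖ ^ κ) :
    MemLp (fun x => ‖x‖ ^ s • f x) p μ := by
  obtain ⟨C, hC⟩ := hvanish.bound
  obtain ⟨r, hr, hball⟩ := Metric.mem_nhdsWithin_iff.1 hC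
  classical
  rw [← Set.piecewise_same (ball 0 r) fun x : V => ‖x‖ ^ s • f x]
  refine MemLp.piecewise measurableSet_ball ?_ (memLp_rpow_norm_smul_compl_ball hf hs hr)
  refine memLp_restrict_ball_of_norm_le_rpow (C := C) (s := s + κ) hp₀ hp (by linarith)
    (aestronglyMeasurable_rpow_norm_smul hf.1) ?_
  filter_upwards [ae_restrict_mem measurableSet_ball, ae_restrict_of_ae (μ.ae_ne 0)] with x hx hx₀
  have hfx : ‖f x‖ ≤ C * ‖x‖ ^ κ := by
    rw [← norm_of_nonneg (rpow_nonneg (norm_nonneg x) κ)]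
    exact hball ⟨hx, hx₀⟩
  calc ‖‖x‖ ^ s • f x‖ = ‖x‖ ^ s * ‖f x‖ := norm_rpow_norm_smul x (f x)
    _ ≤ ‖x‖ ^ s * (C * ‖x‖ ^ κ) := by gcongr
    _ = C * ‖x‖ ^ (s + κ) := by rw [rpow_add (norm_pos_iff.2 hx₀)]; ring

end HaarMeasure

section FourierTransform

variable {V E : Type*} [NormedAddCommGroup V] [InnerProductSpace ℝ V] [FiniteDimensional ℝ V]
  [MeasurableSpace V] [BorelSpace V] [NormedAddCommGroup E] [NormedSpace ℂ E]
  {F : Type*} [NormedAddCommGroup F] [InnerProductSpace ℂ F] [CompleteSpace F]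

theorem fourier_const_smul (c : ℝ) (f : V → E) : 𝓕 (fun x => c • f x) = c • 𝓕 f := by
  ext ξ
  simp only [Real.fourier_eq, Pi.smul_apply, smul_comm _ c, integral_smul]

theorem fourier_comp_smul (f : V → E) {a : ℝ} (ha : a ≠ 0) (ξ : V) :
    𝓕 (fun x => f (a • x)) ξ = |(a ^ finrank ℝ V)⁻¹| • 𝓕 f (a⁻¹ • ξ) := by
  rw [Real.fourier_eq, Real.fourier_eq,
    ← Measure.integral_comp_smul volume (fun x => 𝐞 (-inner ℝ x (a⁻¹ • ξ)) • f x)]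
  simp only [real_inner_smul_left, real_inner_smul_right, inv_mul_cancel_left₀ ha]

theorem continuous_fourier_of_integrable {f : V → E} (hf : Integrable f) : Continuous (𝓕 f) :=
  VectorFourier.fourierIntegral_continuous continuous_fourierChar continuous_inner hf

theorem integral_fourier_schwartz_smul_eq [CompleteSpace E] (ψ : 𝓢(V, ℂ)) {f : V → E}
    (hf : Integrable f) : ∫ x, 𝓕 ψ x • f x = ∫ ξ, ψ ξ • 𝓕 f ξ := by
  simpa [SchwartzMap.fourier_coe] using!
    VectorFourier.integral_fourierIntegral_smul_eq_flip (L := innerₗ V) continuous_fourierChar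
      continuous_inner ψ.integrable hf

theorem ae_eq_of_integral_schwartz_smul_eq [CompleteSpace E] {f g : V → E}
    (hf : LocallyIntegrable f) (hg : LocallyIntegrable g)
    (h : ∀ ψ : 𝓢(V, ℂ), ∫ x, ψ x • f x = ∫ x, ψ x • g x) : f =ᵐ[volume] g := by
  refine ae_eq_of_integral_contDiff_smul_eq hf hg fun ψ hψ hsupp => ?_
  have hsupp' : HasCompactSupport (ofRealCLM ∘ ψ) := hsupp.comp_left rfl
  exact h (hsupp'.toSchwartzMap (ofRealCLM.contDiff.comp hψ))

theorem fourier_ae_eq_fourier_toLp {f : V → F} (hf₁ : Integrable f) (hf₂ : MemLp f 2) :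
    𝓕 f =ᵐ[volume] (𝓕 (hf₂.toLp f) : Lp F 2 (volume : Measure V)) := by
  refine ae_eq_of_integral_schwartz_smul_eq
    (continuous_fourier_of_integrable hf₁).locallyIntegrable
    ((Lp.memLp _).locallyIntegrable one_le_two) fun ψ => ?_
  calc ∫ ξ, ψ ξ • 𝓕 f ξ = ∫ x, 𝓕 ψ x • f x := (integral_fourier_schwartz_smul_eq ψ hf₁).symm
    _ = ∫ x, 𝓕 ψ x • hf₂.toLp f x := by
      refine integral_congr_ae ?_
      filter_upwards [hf₂.coeFn_toLp] with x hx
      rw [hx]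
    _ = 𝓕 (hf₂.toLp f : 𝓢'(V, F)) ψ := by
      rw [TemperedDistribution.fourier_apply, Lp.toTemperedDistribution_apply]
    _ = ∫ ξ, ψ ξ • (𝓕 (hf₂.toLp f) : Lp F 2 (volume : Measure V)) ξ := by
      rw [Lp.fourier_toTemperedDistribution_eq, Lp.toTemperedDistribution_apply]

theorem memLp_fourier_of_integrable {f : V → F} (hf₁ : Integrable f) (hf₂ : MemLp f 2) :
    MemLp (𝓕 f) 2 :=
  (memLp_congr_ae (fourier_ae_eq_fourier_toLp hf₁ hf₂)).2 (Lp.memLp _)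

end FourierTransform

section HomogeneousSobolev

variable {V E : Type*} [NormedAddCommGroup V] [InnerProductSpace ℝ V] [FiniteDimensional ℝ V]
  [MeasurableSpace V] [BorelSpace V] [NormedAddCommGroup E] [NormedSpace ℂ E]

/-- The homogeneous Sobolev norm `‖f‖_{Ḣ^γ} = ‖|ξ|^γ f̂‖_{L²}`, valued in `[0,∞]`: the
scale-invariant counterpart of `sobNorm`. At `ξ = 0` and `γ < 0` the weight `|ξ|^γ` has the junk
value `0`, which is harmless as soon as `{0}` is a null set. -/
noncomputable def homSobNorm (γ : ℝ) (f : V → E) : ℝ≥0∞ :=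
  eLpNorm (fun ξ => ‖ξ‖ ^ γ • 𝓕 f ξ) 2

theorem homSobNorm_const_smul (γ c : ℝ) (f : V → E) :
    homSobNorm γ (fun x => c • f x) = ‖c‖ₑ * homSobNorm γ f := by
  simp only [homSobNorm, fourier_const_smul, Pi.smul_apply, smul_comm _ c]
  exact eLpNorm_const_smul c _ 2 volume

theorem homSobNorm_comp_smul (γ : ℝ) (f : V → E) {a : ℝ} (ha : 0 < a) :
    homSobNorm γ (fun x => f (a • x)) =
      ENNReal.ofReal (a ^ (γ - (finrank ℝ V : ℝ) / 2)) * homSobNorm γ f := by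
  have hweight (ξ : V) : ‖ξ‖ ^ γ • 𝓕 (fun x => f (a • x)) ξ =
      a ^ (γ - finrank ℝ V) • (‖a⁻¹ • ξ‖ ^ γ • 𝓕 f (a⁻¹ • ξ)) := by
    rw [fourier_comp_smul f ha.ne', smul_smul, smul_smul]
    congr 1
    rw [abs_of_nonneg (by positivity), norm_smul, norm_of_nonneg (by positivity),
      mul_rpow (by positivity) (norm_nonneg ξ), inv_rpow ha.le, rpow_sub ha, rpow_natCast]
    have := (rpow_pos_of_pos ha γ).ne'
    field_simp
  have hjacobian : ENNReal.ofReal |(a⁻¹ ^ finrank ℝ V)⁻¹| ^ (1 / (2 : ℝ≥0∞)).toReal =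
      ENNReal.ofReal (a ^ ((finrank ℝ V : ℝ) / 2)) := by
    rw [inv_pow, inv_inv, abs_of_nonneg (by positivity),
      ENNReal.ofReal_rpow_of_nonneg (by positivity) ENNReal.toReal_nonneg, ← rpow_natCast,
      ← rpow_mul ha.le]
    simp [div_eq_mul_inv]
  calc homSobNorm γ (fun x => f (a • x))
      = eLpNorm (a ^ (γ - finrank ℝ V) • fun ξ => ‖a⁻¹ • ξ‖ ^ γ • 𝓕 f (a⁻¹ • ξ)) 2 := by
        simp only [homSobNorm, hweight, Pi.smul_def]
    _ = ENNReal.ofReal (a ^ (γ - finrank ℝ V)) *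
          (ENNReal.ofReal (a ^ ((finrank ℝ V : ℝ) / 2)) * homSobNorm γ f) := by
        rw [eLpNorm_const_smul, Real.enorm_of_nonneg (by positivity),
          eLpNorm_comp_smul (fun ξ => ‖ξ‖ ^ γ • 𝓕 f ξ) (inv_ne_zero ha.ne') ENNReal.ofNat_ne_top,
          hjacobian, homSobNorm]
    _ = ENNReal.ofReal (a ^ (γ - (finrank ℝ V : ℝ) / 2)) * homSobNorm γ f := by
        rw [← mul_assoc, ← ENNReal.ofReal_mul (by positivity), ← rpow_add ha]
        ring_nf

theorem homSobNorm_lt_top [Nontrivial V] {γ κ : ℝ} {f : V → E} (hγ : γ ≤ 0)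
    (hκ : -γ - (finrank ℝ V : ℝ) / 2 < κ) (hf : MemLp (𝓕 f) 2)
    (hvanish : 𝓕 f =O[𝓝[≠] 0] fun ξ => ‖ξ‖ ^ κ) :
    homSobNorm γ f < ∞ :=
  (memLp_rpow_norm_smul two_ne_zero ENNReal.ofNat_ne_top hγ (by simpa using hκ) hf hvanish).2

end HomogeneousSobolev

theorem sobNorm_eq_eLpNorm {d : ℕ} (γ : ℝ) (f : EuclideanSpace ℝ (Fin d) → ℂ) :
    sobNorm γ f = eLpNorm (fun ξ => (1 + ‖ξ‖ ^ 2) ^ (γ / 2) • 𝓕 f ξ) 2 := by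
  rw [eLpNorm_eq_lintegral_rpow_enorm_toReal two_ne_zero ENNReal.ofNat_ne_top, sobNorm,
    ENNReal.toReal_ofNat]
  congr! 3 with ξ
  have hweight : ENNReal.ofReal ((1 + ‖ξ‖ ^ 2) ^ γ) = ‖(1 + ‖ξ‖ ^ 2) ^ (γ / 2)‖ₑ ^ (2 : ℝ) := by
    rw [Real.enorm_of_nonneg (by positivity),
      ENNReal.ofReal_rpow_of_nonneg (by positivity) zero_le_two, ← rpow_mul (by positivity),
      div_mul_cancel₀ γ two_ne_zero]
  rw [hweight, enorm_smul, ENNReal.mul_rpow_of_nonneg _ _ zero_le_two, enorm_eq_nnnorm (𝓕 f ξ)]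

theorem sobNorm_le_homSobNorm {d : ℕ} [NeZero d] {γ : ℝ} (hγ : γ ≤ 0)
    (f : EuclideanSpace ℝ (Fin d) → ℂ) : sobNorm γ f ≤ homSobNorm γ f := by
  rw [sobNorm_eq_eLpNorm, homSobNorm]
  refine eLpNorm_mono_ae ?_
  filter_upwards [Measure.ae_ne volume 0] with ξ hξ
  have hweight : (1 + ‖ξ‖ ^ 2) ^ (γ / 2) ≤ ‖ξ‖ ^ γ := by
    calc (1 + ‖ξ‖ ^ 2) ^ (γ / 2) ≤ (‖ξ‖ ^ 2) ^ (γ / 2) :=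
          rpow_le_rpow_of_nonpos (by positivity) (by linarith) (by linarith)
      _ = ‖ξ‖ ^ γ := by
          rw [← rpow_two, ← rpow_mul (norm_nonneg ξ), mul_div_cancel₀ γ two_ne_zero]
  rw [norm_smul, norm_smul, norm_of_nonneg (by positivity), norm_of_nonneg (by positivity)]
  gcongr

theorem sobNorm_smul_comp_smul_le {d : ℕ} [NeZero d] {γ c a : ℝ} (hγ : γ ≤ 0) (hc : 0 ≤ c)
    (ha : 0 < a) (f : EuclideanSpace ℝ (Fin d) → ℂ) :
    sobNorm γ (fun x => c • f (a • x)) ≤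
      ENNReal.ofReal (c * a ^ (γ - (d : ℝ) / 2)) * homSobNorm γ f := by
  calc sobNorm γ (fun x => c • f (a • x)) ≤ homSobNorm γ (fun x => c • f (a • x)) :=
        sobNorm_le_homSobNorm hγ _
    _ = ENNReal.ofReal (c * a ^ (γ - (d : ℝ) / 2)) * homSobNorm γ f := by
        rw [homSobNorm_const_smul γ c fun x => f (a • x), homSobNorm_comp_smul γ f ha,
          finrank_euclideanSpace_fin, Real.enorm_of_nonneg hc, ← mul_assoc, ENNReal.ofReal_mul hc]

theorem rpow_neg_mul_inv_mul_rpow {l δ : ℝ} (hl : 0 < l) (hδ : 0 < δ) (α s : ℝ) :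
    l ^ (-α) * (l⁻¹ * δ) ^ s = l ^ (-α - s) * δ ^ s := by
  rw [mul_rpow (by positivity) hδ.le, inv_rpow hl.le, ← mul_assoc, rpow_sub hl, div_eq_mul_inv]

theorem stmt13_general {d : ℕ} [NeZero d] {γ α Γ κ : ℝ} (hγ : γ ≤ 0) (hΓ : Γ = (d : ℝ) / 2 - α)
    (hκ : -γ - (d : ℝ) / 2 < κ) {f : EuclideanSpace ℝ (Fin d) → ℂ} (hf₁ : Integrable f)
    (hf₂ : MemLp f 2) (hvanish : 𝓕 f =O[𝓝[≠] 0] fun ξ => ‖ξ‖ ^ κ) :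
    ∃ C > (0 : ℝ), ∀ l δ : ℝ, 0 < l → 0 < δ →
      sobNorm γ (fun x => (l ^ (-α) : ℝ) • f ((l⁻¹ * δ) • x)) ≤
        ENNReal.ofReal (C * l ^ (Γ - γ) * δ ^ (γ - (d : ℝ) / 2)) := by
  have hfin : homSobNorm γ f < ∞ :=
    homSobNorm_lt_top hγ (by rwa [finrank_euclideanSpace_fin])
      (memLp_fourier_of_integrable hf₁ hf₂) hvanish
  set K : ℝ := (homSobNorm γ f).toReal
  refine ⟨K + 1, by positivity, fun l δ hl hδ => ?_⟩
  calc sobNorm γ (fun x => (l ^ (-α) : ℝ) • f ((l⁻¹ * δ) • x))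
      ≤ ENNReal.ofReal (l ^ (-α) * (l⁻¹ * δ) ^ (γ - (d : ℝ) / 2)) * homSobNorm γ f :=
        sobNorm_smul_comp_smul_le hγ (by positivity) (by positivity) f
    _ = ENNReal.ofReal (l ^ (Γ - γ) * δ ^ (γ - (d : ℝ) / 2) * K) := by
        rw [rpow_neg_mul_inv_mul_rpow hl hδ, show -α - (γ - (d : ℝ) / 2) = Γ - γ by rw [hΓ]; ring,
          ENNReal.ofReal_mul (q := K) (by positivity), ENNReal.ofReal_toReal hfin.ne]
    _ ≤ ENNReal.ofReal ((K + 1) * l ^ (Γ - γ) * δ ^ (γ - (d : ℝ) / 2)) := by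
        rw [mul_comm _ K, ← mul_assoc]
        gcongr
        exact le_add_of_nonneg_right zero_le_one

/-- `H^γ` estimate for the rescaled data
`g(x) = λ^{-4/(ν-1)} φ₀(λ^{-1}δx)` when `γ ≤ -d/2`, assuming the Fourier transform
of `φ₀` vanishes of order `κ > -γ - d/2` at the origin; here `Γ = d/2 - 4/(ν-1)`. -/
theorem stmt13 (d : ℕ) (hd : 1 ≤ d) (ν : ℝ) (hν : 1 < ν) (γ : ℝ)
    (hγ : γ ≤ -(d : ℝ) / 2) (Γ : ℝ) (hΓ : Γ = (d : ℝ) / 2 - 4 / (ν - 1))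
    (φ₀ : 𝓢(EuclideanSpace ℝ (Fin d), ℂ))
    (κ C₀ r₀ : ℝ) (hκ : -γ - (d : ℝ) / 2 < κ) (hC₀ : 0 < C₀) (hr₀ : 0 < r₀)
    (hvanish : ∀ ξ : EuclideanSpace ℝ (Fin d), ‖ξ‖ ≤ r₀ → ‖𝓕 (⇑φ₀) ξ‖ ≤ C₀ * ‖ξ‖ ^ κ) :
    ∃ C > (0 : ℝ), ∀ l δ : ℝ, 0 < l → l ≤ δ → δ ≤ 1 →
      sobNorm γ (fun x => (l ^ (-(4 / (ν - 1))) : ℝ) • φ₀ ((l⁻¹ * δ) • x)) ≤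
        ENNReal.ofReal (C * l ^ (Γ - γ) * δ ^ (γ - (d : ℝ) / 2)) := by
  have : NeZero d := ⟨by lia⟩
  obtain ⟨C, hC, hbound⟩ := stmt13_general (by linarith [d.cast_nonneg (α := ℝ)]) hΓ hκ
    φ₀.integrable (φ₀.memLp 2)
    ((isBigO_rpow_norm_of_norm_le hr₀ hvanish).mono nhdsWithin_le_nhds)
  exact ⟨C, hC, fun l δ hl hlδ _ => hbound l δ hl (hl.trans_le hlδ)⟩
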